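/- arXiv:2004.10514 — 2 statements merged into one kernel-verified Lean document; each statement's English description precedes it below -/
import Mathlib

section
/- Let F be a finite-dimensional real vector space of dimension m ≥ 1, and let ‖·‖₁ ≤ ‖·‖₂ ≤ … ≤ ‖·‖_p be finitely many seminorms on F such that ‖·‖_p is a norm. Then there exist linear operators B₁, …, B_m : F → F, each of rank at most 1, and a constant R > 0, such that e = Σ_{j=1}^m B_j e for every e ∈ F, and max_{1 ≤ j ≤ m} ‖B_j e‖_k ≤ R ‖e‖_k for every e ∈ F and every k = 1, …, p. -/
open Filter Topology

/-- The kernel of a seminorm as a submodule. -/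
def seminormKer {F : Type*} [AddCommGroup F] [Module ℝ F] (q : Seminorm ℝ F) : Submodule ℝ F where
  carrier := {e | q e = 0}
  add_mem' := by
    intro a b ha hb
    have h1 := map_add_le_add q a b
    have h2 := apply_nonneg q (a + b)
    simp only [Set.mem_ofPred_eq] at *
    linarith
  zero_mem' := by simp
  smul_mem' := by
    intro c x hx
    simp only [Set.mem_ofPred_eq] at *
    rw [map_smul_eq_mul, hx, mul_zero]

lemma bound_of_definite {F : Type*} [AddCommGroup F] [Module ℝ F] [FiniteDimensional ℝ F]
    (q : Seminorm ℝ F) (hq : ∀ e, q e = 0 → e = 0) (f : F →ₗ[ℝ] ℝ) :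
    ∃ C : ℝ, 0 ≤ C ∧ ∀ e, |f e| ≤ C * q e := by
  let : Norm F := ⟨q⟩
  have core : NormedSpace.Core ℝ F :=
    { norm_nonneg := fun x => apply_nonneg q x
      norm_smul := fun c x => map_smul_eq_mul q c x
      norm_triangle := fun x y => map_add_le_add q x y
      norm_eq_zero_iff := fun x => ⟨hq x, fun h => by subst h; exact map_zero q⟩ }
  let : NormedAddCommGroup F := NormedAddCommGroup.ofCore core
  let : NormedSpace ℝ F := NormedSpace.ofCore core
  exact ⟨‖LinearMap.toContinuousLinearMap f‖, norm_nonneg _,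
    fun e => (LinearMap.toContinuousLinearMap f).le_opNorm e⟩

lemma bound_of_ker {F : Type*} [AddCommGroup F] [Module ℝ F] [FiniteDimensional ℝ F]
    (q : Seminorm ℝ F) (f : F →ₗ[ℝ] ℝ) (hf : ∀ e, q e = 0 → f e = 0) :
    ∃ C : ℝ, 0 ≤ C ∧ ∀ e, |f e| ≤ C * q e := by
  obtain ⟨W, hW⟩ := Submodule.exists_isCompl (seminormKer q)
  obtain ⟨C, hC, h⟩ := bound_of_definite (q.comp W.subtype) (by
    rintro ⟨e, he⟩ h
    have h1 : e ∈ seminormKer q := h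
    have := (Submodule.disjoint_def.1 hW.disjoint) e h1 he
    subst this; rfl) (f.comp W.subtype)
  refine ⟨C, hC, fun e => ?_⟩
  have he : e ∈ seminormKer q ⊔ W := by rw [hW.sup_eq_top]; trivial
  obtain ⟨n, hn, w, hw, rfl⟩ := Submodule.mem_sup.1 he
  have hn : q n = 0 := hn
  have h2 := h ⟨w, hw⟩
  simp only [LinearMap.comp_apply, Submodule.subtype_apply, Seminorm.comp_apply] at h2
  have h3 : q w ≤ q (n + w) := by
    have := map_add_le_add q (n + w) (-n)
    rw [map_neg_eq_map, hn] at this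
    simpa using this
  rw [map_add, hf n hn, zero_add]
  exact h2.trans (by gcongr)

lemma exists_adapted {F : Type*} [AddCommGroup F] [Module ℝ F] (M : ℕ → Submodule ℝ F)
    (hM : Monotone M) (n : ℕ) : ∃ S : Set F, LinearIndepOn ℝ id S ∧ S ⊆ M n ∧
      ∀ i ≤ n, M i ≤ Submodule.span ℝ (S ∩ M i) := by
  have step : ∀ (S : Set F) (N : Submodule ℝ F), LinearIndepOn ℝ id S → S ⊆ N →
      ∃ T : Set F, S ⊆ T ∧ LinearIndepOn ℝ id T ∧ T ⊆ N ∧ N ≤ Submodule.span ℝ (T ∩ N) := by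
    intro S N hS hSN
    obtain ⟨T, hTN, hST, hsp, hT⟩ := exists_linearIndepOn_id_extension hS hSN
    refine ⟨T, hST, hT, hTN, ?_⟩
    rw [Set.inter_eq_left.2 hTN]
    exact hsp
  induction n with
  | zero =>
    obtain ⟨T, -, h1, h2, h3⟩ := step ∅ (M 0) (linearIndepOn_empty _ _) (by simp)
    exact ⟨T, h1, h2, fun i hi => by rwa [Nat.le_zero.1 hi]⟩
  | succ n ih =>
    obtain ⟨S, h1, h2, h3⟩ := ih
    obtain ⟨T, hST, h4, h5, h6⟩ := step S (M (n+1)) h1 (h2.trans (hM n.le_succ))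
    refine ⟨T, h4, h5, fun i hi => ?_⟩
    rcases Nat.lt_or_ge n i with h | h
    · obtain rfl : i = n + 1 := by omega
      exact h6
    · exact (h3 i h).trans (Submodule.span_mono (Set.inter_subset_inter_left _ hST))

theorem exists_rank_one_decomposition
    (F : Type*) [AddCommGroup F] [Module ℝ F] [FiniteDimensional ℝ F]
    (m : ℕ) (hm : 1 ≤ m) (hdim : Module.finrank ℝ F = m)
    (p : ℕ) (hp : 1 ≤ p) (q : ℕ → Seminorm ℝ F)
    (hmono : ∀ k, 1 ≤ k → k < p → ∀ e : F, q k e ≤ q (k + 1) e)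
    (hnorm : ∀ e : F, e ≠ 0 → 0 < q p e) :
    ∃ (B : ℕ → F →ₗ[ℝ] F) (R : ℝ), 0 < R ∧
      (∀ j, 1 ≤ j → j ≤ m → Module.finrank ℝ (LinearMap.range (B j)) ≤ 1) ∧
      (∀ e : F, e = ∑ j ∈ Finset.Icc 1 m, B j e) ∧
      (∀ e : F, ∀ k, 1 ≤ k → k ≤ p → ∀ j, 1 ≤ j → j ≤ m → q k (B j e) ≤ R * q k e) := by
  obtain ⟨S, hS, -, hsp⟩ := exists_adapted
    (fun i => if i < p then seminormKer (q (p - i)) else ⊤) (by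
      refine monotone_nat_of_le_succ fun i => ?_
      by_cases h : i + 1 < p
      · rw [if_pos h, if_pos (by omega)]
        intro e he
        have he : q (p - i) e = 0 := he
        have h1 := hmono (p - (i + 1)) (by omega) (by omega) e
        rw [show p - (i + 1) + 1 = p - i by omega, he] at h1
        exact le_antisymm h1 (apply_nonneg _ _)
      · rw [if_neg h]; exact le_top) p
  have htop : ⊤ ≤ Submodule.span ℝ (Set.range ((↑) : S → F)) := by
    have := hsp p le_rfl
    simpa using this
  have hS' : LinearIndependent ℝ ((↑) : S → F) := hS
  let b0 : Module.Basis S ℝ F := Module.Basis.mk hS' htop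
  have : Fintype S := FiniteDimensional.fintypeBasisIndex b0
  have hcard : Fintype.card S = m := by rw [← hdim, Module.finrank_eq_card_basis b0]
  let b : Module.Basis (Fin m) ℝ F := b0.reindex (Fintype.equivFinOfCardEq hcard)
  have hb : ∀ v ∈ S, ∃ i, b i = v := by
    intro v hv
    refine ⟨Fintype.equivFinOfCardEq hcard ⟨v, hv⟩, ?_⟩
    simp [b, b0]
  have key : ∀ (j : Fin m) (k : ℕ), ∃ C : ℝ, 0 ≤ C ∧ (1 ≤ k → k ≤ p → ∀ e,
      q k (b.coord j e • b j) ≤ C * q k e) := by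
    intro j k
    by_cases hk : 1 ≤ k ∧ k ≤ p
    swap
    · exact ⟨0, le_rfl, fun h1 h2 => absurd ⟨h1, h2⟩ hk⟩
    by_cases hj : q k (b j) = 0
    · exact ⟨0, le_rfl, fun _ _ e => by rw [map_smul_eq_mul, hj]; simp⟩
    have hle : seminormKer (q k) ≤ LinearMap.ker (b.coord j) := by
      have h1 := hsp (p - k) (by omega)
      rw [if_pos (by omega), show p - (p - k) = k by omega] at h1
      refine h1.trans (Submodule.span_le.2 ?_)
      rintro v ⟨hv, hvk⟩
      obtain ⟨i, rfl⟩ := hb v hv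
      have hij : i ≠ j := by rintro rfl; exact hj hvk
      simp [Finsupp.single_apply, hij]
    obtain ⟨C, hC, h⟩ := bound_of_ker (q k) (b.coord j) (fun e he => hle he)
    refine ⟨C * q k (b j), mul_nonneg hC (apply_nonneg _ _), fun _ _ e => ?_⟩
    rw [map_smul_eq_mul, Real.norm_eq_abs]
    calc _ ≤ (C * q k e) * q k (b j) := mul_le_mul_of_nonneg_right (h e) (apply_nonneg _ _)
      _ = _ := by ring
  choose C hC hCb using key
  refine ⟨fun j => if h : j - 1 < m then (b.coord ⟨j - 1, h⟩).smulRight (b ⟨j - 1, h⟩) else 0,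
    1 + ∑ j, ∑ k ∈ Finset.range (p + 1), C j k, ?_, ?_, ?_, ?_⟩
  · have : 0 ≤ ∑ j, ∑ k ∈ Finset.range (p + 1), C j k :=
      Finset.sum_nonneg fun j _ => Finset.sum_nonneg fun k _ => hC j k
    linarith
  · intro j h1 h2
    have h : j - 1 < m := by omega
    refine (Submodule.finrank_mono (t := Submodule.span ℝ {b ⟨j - 1, h⟩}) ?_).trans
      ((finrank_span_le_card _).trans (by simp))
    rintro _ ⟨e, rfl⟩
    simp only [dif_pos h]
    exact Submodule.mem_span_singleton.2 ⟨_, rfl⟩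
  · intro e
    have hI : Finset.Icc 1 m = Finset.Ico 1 (m + 1) := by ext; simp
    rw [hI, Finset.sum_Ico_eq_sum_range, Nat.add_sub_cancel, Finset.sum_range]
    conv_lhs => rw [← b.sum_repr e]
    refine Finset.sum_congr rfl fun i _ => ?_
    simp
  · intro e k hk1 hkp j h1 h2
    have h : j - 1 < m := by omega
    simp only [dif_pos h]
    refine (hCb ⟨j - 1, h⟩ k hk1 hkp e).trans (mul_le_mul_of_nonneg_right ?_ (apply_nonneg _ _))
    have e1 : C ⟨j - 1, h⟩ k ≤ ∑ k ∈ Finset.range (p + 1), C ⟨j - 1, h⟩ k :=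
      Finset.single_le_sum (f := fun k => C ⟨j - 1, h⟩ k) (fun k _ => hC _ k)
        (Finset.mem_range.2 (by omega))
    have e2 : ∑ k ∈ Finset.range (p + 1), C ⟨j - 1, h⟩ k
        ≤ ∑ j, ∑ k ∈ Finset.range (p + 1), C j k :=
      Finset.single_le_sum (f := fun j => ∑ k ∈ Finset.range (p + 1), C j k)
        (fun j _ => Finset.sum_nonneg fun k _ => hC j k) (Finset.mem_univ _)
    linarith
end

section
/- Let (X, ‖·‖) be an infinite-dimensional Banach space over ℝ and let u : X → ℝ be a linear functional that is not continuous. Define the norm |||x||| := |u(x)| + ‖x‖ on X. Then there exists a sequence (x_n) in X that is Cauchy for |||·||| and satisfies ‖x_n‖ → 0 but |||x_n||| does not converge to 0; equivalently, the unique continuous linear extension of the identity map (X, |||·|||) → (X, ‖·‖) to the completion of (X, |||·|||) is not injective. -/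
open Filter Topology

/-- Let `X` be an infinite-dimensional Banach space and `u : X → ℝ` a discontinuous linear
functional; set `|||x||| := |u x| + ‖x‖`. Then there is a sequence `(x n)` in `X` which is
Cauchy for `|||·|||`, with `‖x n‖ → 0`, but `|||x n|||` not converging to `0` (equivalently,
the continuous extension of the identity `(X, |||·|||) → (X, ‖·‖)` to the completion of
`(X, |||·|||)` is not injective). -/
theorem exists_tripleNorm_cauchy_not_null
    (X : Type*) [NormedAddCommGroup X] [NormedSpace ℝ X] [CompleteSpace X]
    (hX : ¬ FiniteDimensional ℝ X)
    (u : X →ₗ[ℝ] ℝ) (hu : ¬ Continuous u) :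
    ∃ x : ℕ → X,
      (∀ ε : ℝ, 0 < ε → ∃ N : ℕ, ∀ m ≥ N, ∀ n ≥ N,
        |u (x m - x n)| + ‖x m - x n‖ < ε) ∧
      Tendsto (fun n => ‖x n‖) atTop (𝓝 0) ∧
      ¬ Tendsto (fun n => |u (x n)| + ‖x n‖) atTop (𝓝 0) := by
  have key : ∀ n : ℕ, ∃ x : X, u x = 1 ∧ ‖x‖ < 1 / ((n : ℝ) + 1) := by
    intro n
    by_contra! h
    apply hu
    refine AddMonoidHomClass.continuous_of_bound u ((n : ℝ) + 1) ?_
    intro x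
    have hn : (0 : ℝ) < (n : ℝ) + 1 := by positivity
    by_cases hx : u x = 0
    · rw [hx, norm_zero]
      positivity
    · have h1 := h ((u x)⁻¹ • x) (by simp [hx])
      have hpos : 0 < ‖u x‖ := norm_pos_iff.mpr hx
      rw [norm_smul, norm_inv, inv_mul_eq_div, div_le_div_iff₀ hn hpos] at h1
      linarith
  choose x hx1 hx2 using key
  have hlim : Tendsto (fun n => ‖x n‖) atTop (𝓝 0) :=
    squeeze_zero (fun n => norm_nonneg _) (fun n => (hx2 n).le)
      tendsto_one_div_add_atTop_nhds_zero_nat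
  refine ⟨x, ?_, hlim, ?_⟩
  · intro ε hε
    obtain ⟨N, hN⟩ := eventually_atTop.mp (hlim.eventually_lt_const (half_pos hε))
    refine ⟨N, fun m hm n hn => ?_⟩
    have h1 := hN m hm
    have h2 := hN n hn
    have h3 := norm_sub_le (x m) (x n)
    rw [map_sub, hx1, hx1, sub_self, abs_zero]
    linarith
  · intro h
    have h2 := h.sub hlim
    simp only [hx1, abs_one, add_sub_cancel_right, sub_zero] at h2
    exact one_ne_zero (tendsto_nhds_unique tendsto_const_nhds h2)
end
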